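/- Under the polynomial parametric setting and the Archimedean assumption, assume K_y is nonempty for every y ∈ Y, and suppose that for some index k the description of K includes the boolean constraint x_k² − x_k = 0 (so x_k ∈ {0,1} on K). For each i ≥ i_0 let z^i be a nearly optimal feasible solution of the i-th semidefinite relaxation with L_{z^i}(f) ≤ ρ_i + 1/i. If for φ-almost all y ∈ Y every optimal solution x ∈ X*_y has x_k = 1, then lim_{i→∞} z^i_{e(k)0} = 1; if for φ-almost all y ∈ Y every optimal solution x ∈ X*_y has x_k = 0, then lim_{i→∞} z^i_{e(k)0} = 0 (where e(k) ∈ ℕ^n is the k-th unit multi-index). -/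

import Mathlib

open MeasureTheory MvPolynomial Filter Topology Set

noncomputable section

/-- The Riesz-like linear functional `L_z` associated with a double-indexed real
sequence `z = (z_{αβ})`, sending `Σ f_{αβ} x^α y^β` to `Σ f_{αβ} z_{αβ}`. -/
def Lz (n p : ℕ) (z : (Fin n → ℕ) → (Fin p → ℕ) → ℝ)
    (q : MvPolynomial (Fin n ⊕ Fin p) ℝ) : ℝ :=
  ∑ d ∈ q.support, q.coeff d * z (fun k => d (Sum.inl k)) (fun l => d (Sum.inr l))

/-- Every monomial `x^α y^β` of `q` satisfies `|α| ≤ i` and `|β| ≤ i`, i.e. `q` is in the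
span of the monomial basis indexing the moment matrix `M_i`. -/
def DegOK (n p : ℕ) (i : ℕ) (q : MvPolynomial (Fin n ⊕ Fin p) ℝ) : Prop :=
  ∀ d ∈ q.support, (∑ k, d (Sum.inl k)) ≤ i ∧ (∑ l, d (Sum.inr l)) ≤ i

/-- `⌈deg h / 2⌉`. -/
def halfDeg {σ : Type*} (h : MvPolynomial σ ℝ) : ℕ := (h.totalDegree + 1) / 2

/-- Feasibility of the sequence `z` for the `i`-th moment relaxation:
`M_i(z) ⪰ 0`, `M_{i-v_j}(h_j z) ⪰ 0` for all `j`, and `L_z(y^β) = γ_β` for `|β| ≤ 2i`.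
Positive semidefiniteness of the moment (resp. localizing) matrix is expressed through
nonnegativity of the associated quadratic forms `c ↦ cᵀ M_i(z) c = L_z(q²)`
(resp. `cᵀ M_{i-v_j}(h_j z) c = L_z(h_j q²)`), `q` ranging over the polynomials spanned
by the monomials indexing the matrix. -/
def RelaxFeasible (n p : ℕ) {ι : Type*} [Fintype ι]
    (H : ι → MvPolynomial (Fin n ⊕ Fin p) ℝ)
    (γ : (Fin p → ℕ) → ℝ) (i : ℕ)
    (z : (Fin n → ℕ) → (Fin p → ℕ) → ℝ) : Prop :=
  (∀ q, DegOK n p i q → 0 ≤ Lz n p z (q ^ 2)) ∧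
  (∀ j, ∀ q, DegOK n p (i - halfDeg (H j)) q → 0 ≤ Lz n p z (H j * q ^ 2)) ∧
  (∀ β : Fin p → ℕ, (∑ l, β l) ≤ 2 * i → z (fun _ => 0) β = γ β)

/-- Optimal value `ρ_i` of the `i`-th (primal) semidefinite relaxation. -/
def rhoSDP (n p : ℕ) {ι : Type*} [Fintype ι]
    (H : ι → MvPolynomial (Fin n ⊕ Fin p) ℝ)
    (γ : (Fin p → ℕ) → ℝ) (f : MvPolynomial (Fin n ⊕ Fin p) ℝ) (i : ℕ) : ℝ :=
  sInf {r | ∃ z, RelaxFeasible n p H γ i z ∧ r = Lz n p z f}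

/-- Evaluation of a polynomial in `(x, y)` at a point of `ℝ^n × ℝ^p`. -/
def evalXY (n p : ℕ) (q : MvPolynomial (Fin n ⊕ Fin p) ℝ)
    (w : (Fin n → ℝ) × (Fin p → ℝ)) : ℝ :=
  eval (Sum.elim w.1 w.2) q

/-- Optimal value `ρ` of the infinite-dimensional problem `P`: the infimum of `∫_K f dμ`
over finite Borel measures `μ` on `K` whose marginal on `ℝ^p` is `φ`. -/
def rhoP (n p : ℕ) (f : MvPolynomial (Fin n ⊕ Fin p) ℝ)
    (K : Set ((Fin n → ℝ) × (Fin p → ℝ))) (φ : Measure (Fin p → ℝ)) : ℝ :=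
  sInf {r | ∃ μ : Measure ((Fin n → ℝ) × (Fin p → ℝ)),
    IsFiniteMeasure μ ∧ μ Kᶜ = 0 ∧ μ.map Prod.snd = φ ∧
    r = ∫ w in K, evalXY n p f w ∂μ}

/-- `i₀ := max(⌈deg f / 2⌉, max_j ⌈deg h_j / 2⌉)`. -/
def iZero (n p : ℕ) {ι : Type*} [Fintype ι]
    (H : ι → MvPolynomial (Fin n ⊕ Fin p) ℝ)
    (f : MvPolynomial (Fin n ⊕ Fin p) ℝ) : ℕ :=
  max (halfDeg f) (Finset.univ.sup fun j => halfDeg (H j))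

/-- The Archimedean (Putinar) assumption for the family `H`: for some `N`,
`N - ‖(x,y)‖²` lies in the quadratic module generated by the `H j`. -/
def ArchimedeanQM (n p : ℕ) {ι : Type*} [Fintype ι]
    (H : ι → MvPolynomial (Fin n ⊕ Fin p) ℝ) : Prop :=
  ∃ (N : ℝ) (σ0 : MvPolynomial (Fin n ⊕ Fin p) ℝ)
    (σ : ι → MvPolynomial (Fin n ⊕ Fin p) ℝ),
    IsSumSq σ0 ∧ (∀ j, IsSumSq (σ j)) ∧
    C N - (∑ i : Fin n ⊕ Fin p, X i ^ 2) = σ0 + ∑ j, σ j * H j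

/-!
Along any ultrafilter the functionals `L_{z^i}` converge pointwise, because the Archimedean
assumption bounds each of them on a fixed polynomial once `i` is large. The limit is a state of the
quadratic module generated by the constraints. Extreme states are multiplicative, hence evaluations
at points of `K`, so by Krein–Milman every state is integration against a probability measure `μ` on
`K`. The marginal of `μ` on the parameters is `φ`, since compactly supported measures are
determined by their moments. A Hahn–Banach extension dominating `g ↦ ∫ min_{K_y} g dφ(y)` produces
a feasible moment sequence of cost `∫ J dφ`, so near optimality forces `∫ f dμ ≤ ∫ J dφ`. Hence `μ`
is carried by the pairs `(x, y)` with `x` optimal for `y`, and any function prescribed there by the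
parameter alone has a prescribed `μ`-integral.
-/

section QuadraticModule

variable {A ι : Type*} [CommRing A]

/-- The quadratic module generated by the family `H`, i.e. all finite sums of elements of the form
`a ^ 2` and `H j * a ^ 2`; these are the elements on which feasible moment functionals are
nonnegative. -/
def quadraticModule (H : ι → A) : AddSubmonoid A :=
  AddSubmonoid.closure ({x | ∃ a, x = a ^ 2} ∪ {x | ∃ j a, x = H j * a ^ 2})

variable {H : ι → A}

lemma sq_mem_quadraticModule (a : A) : a ^ 2 ∈ quadraticModule H :=
  AddSubmonoid.subset_closure (Or.inl ⟨a, rfl⟩)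

lemma mul_sq_mem_quadraticModule (j : ι) (a : A) : H j * a ^ 2 ∈ quadraticModule H :=
  AddSubmonoid.subset_closure (Or.inr ⟨j, a, rfl⟩)

lemma sq_mul_mem_quadraticModule (b : A) {m : A} (hm : m ∈ quadraticModule H) :
    b ^ 2 * m ∈ quadraticModule H := by
  induction hm using AddSubmonoid.closure_induction with
  | mem x hx =>
    rcases hx with ⟨a, rfl⟩ | ⟨j, a, rfl⟩
    · rw [← mul_pow]
      exact sq_mem_quadraticModule _
    · rw [mul_left_comm, ← mul_pow]
      exact mul_sq_mem_quadraticModule _ _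
  | zero => simp only [mul_zero, zero_mem]
  | add x y _ _ hx hy => rw [mul_add]; exact add_mem hx hy

lemma one_mem_quadraticModule : (1 : A) ∈ quadraticModule H := by
  simpa only [one_pow] using sq_mem_quadraticModule (H := H) 1

lemma mem_quadraticModule_of_isSumSq {s : A} (hs : IsSumSq s) : s ∈ quadraticModule H := by
  induction hs with
  | zero => exact zero_mem _
  | sq_add a _ ih => exact add_mem (sq a ▸ sq_mem_quadraticModule a) ih

lemma mul_mem_quadraticModule_of_isSumSq {s : A} (hs : IsSumSq s) (j : ι) :
    s * H j ∈ quadraticModule H := by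
  induction hs with
  | zero => simp only [zero_mul, zero_mem]
  | sq_add a _ ih =>
    rw [add_mul, ← sq, mul_comm (a ^ 2)]
    exact add_mem (mul_sq_mem_quadraticModule j a) ih

variable [Algebra ℝ A]

lemma smul_mem_quadraticModule {r : ℝ} (hr : 0 ≤ r) {m : A} (hm : m ∈ quadraticModule H) :
    r • m ∈ quadraticModule H := by
  have := sq_mul_mem_quadraticModule (algebraMap ℝ A √r) hm
  rwa [← map_pow, Real.sq_sqrt hr, ← Algebra.smul_def] at this

lemma algebraMap_mem_quadraticModule {r : ℝ} (hr : 0 ≤ r) :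
    algebraMap ℝ A r ∈ quadraticModule H := by
  rw [Algebra.algebraMap_eq_smul_one]
  exact smul_mem_quadraticModule hr one_mem_quadraticModule

/-- The family `H` is Archimedean if every element of the algebra is bounded above by a constant
in the preorder defined by `quadraticModule H`. -/
def ArchimedeanFamily (H : ι → A) : Prop :=
  ∀ a, ∃ c : ℝ, algebraMap ℝ A c - a ∈ quadraticModule H

variable (H) in
/-- The subalgebra of bounded elements of the preorder defined by `quadraticModule H`. It reduces
the verification of `ArchimedeanFamily H` to a set of algebra generators. -/
def boundedSubalgebra : Subalgebra ℝ A where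
  carrier := {a | ∃ c : ℝ, 0 ≤ c ∧ algebraMap ℝ A c - a ^ 2 ∈ quadraticModule H}
  mul_mem' := by
    rintro a b ⟨c, hc, ha⟩ ⟨d, hd, hb⟩
    refine ⟨d * c, by positivity, ?_⟩
    have decomposition : algebraMap ℝ A (d * c) - (a * b) ^ 2
        = d • (algebraMap ℝ A c - a ^ 2) + a ^ 2 * (algebraMap ℝ A d - b ^ 2) := by
      rw [Algebra.smul_def, map_mul]
      ring
    rw [decomposition]
    exact add_mem (smul_mem_quadraticModule hd ha) (sq_mul_mem_quadraticModule a hb)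
  add_mem' := by
    rintro a b ⟨c, hc, ha⟩ ⟨d, hd, hb⟩
    refine ⟨2 * (c + d), by positivity, ?_⟩
    have decomposition : algebraMap ℝ A (2 * (c + d)) - (a + b) ^ 2
        = (2 : ℝ) • ((algebraMap ℝ A c - a ^ 2) + (algebraMap ℝ A d - b ^ 2)) + (a - b) ^ 2 := by
      rw [Algebra.smul_def, map_mul, map_add, map_ofNat]
      ring
    rw [decomposition]
    exact add_mem (smul_mem_quadraticModule zero_le_two (add_mem ha hb)) (sq_mem_quadraticModule _)
  algebraMap_mem' r := ⟨r ^ 2, sq_nonneg r, by simp only [map_pow, sub_self, zero_mem]⟩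

lemma archimedeanFamily_of_boundedSubalgebra_eq_top (h : boundedSubalgebra H = ⊤) :
    ArchimedeanFamily H := by
  intro a
  obtain ⟨c, -, ha⟩ : a ∈ boundedSubalgebra H := h ▸ Algebra.mem_top
  refine ⟨2⁻¹ * (c + 1), ?_⟩
  have decomposition : algebraMap ℝ A (2⁻¹ * (c + 1)) - a
      = (2⁻¹ : ℝ) • ((algebraMap ℝ A c - a ^ 2) + (1 - a) ^ 2) := by
    have half : algebraMap ℝ A 2⁻¹ * 2 = 1 := by
      rw [← map_ofNat (algebraMap ℝ A) 2, ← map_mul, inv_mul_cancel₀ two_ne_zero, map_one]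
    rw [Algebra.smul_def, map_mul, map_add, map_one]
    linear_combination a * half
  rw [decomposition]
  exact smul_mem_quadraticModule (by positivity) (add_mem ha (sq_mem_quadraticModule _))

end QuadraticModule

section States

variable {A ι : Type*} [CommRing A] [Algebra ℝ A] {H : ι → A} {F : A → ℝ}

variable (H) in
/-- The state space of `quadraticModule H`: normalized linear functionals that are nonnegative on
the quadratic module. States are kept as plain functions so that the state space inherits the
topology of pointwise convergence. -/
def states : Set (A → ℝ) :=
  {F | IsLinearMap ℝ F ∧ F 1 = 1 ∧ ∀ m ∈ quadraticModule H, 0 ≤ F m}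

lemma le_of_algebraMap_sub_mem (hF : F ∈ states H) {c : ℝ} {a : A}
    (h : algebraMap ℝ A c - a ∈ quadraticModule H) : F a ≤ c := by
  have := hF.2.2 _ h
  rw [hF.1.map_sub, Algebra.algebraMap_eq_smul_one, hF.1.map_smul, hF.2.1, smul_eq_mul,
    mul_one] at this
  linarith

lemma inv_smul_mem_states (hF : IsLinearMap ℝ F) (h1 : 0 < F 1)
    (hpos : ∀ m ∈ quadraticModule H, 0 ≤ F m) : (F 1)⁻¹ • F ∈ states H :=
  ⟨⟨fun a b => by simp only [Pi.smul_apply, hF.map_add, smul_add],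
    fun c a => by simp only [Pi.smul_apply, hF.map_smul, smul_comm c]⟩,
    inv_mul_cancel₀ h1.ne', fun m hm => mul_nonneg (inv_pos.2 h1).le (hpos m hm)⟩

lemma convex_states : Convex ℝ (states H) := by
  rintro F ⟨hF, hF1, hFpos⟩ G ⟨hG, hG1, hGpos⟩ s t hs ht hst
  refine ⟨⟨fun a b => ?_, fun c a => ?_⟩, ?_, fun m hm => ?_⟩
  · simp only [Pi.add_apply, Pi.smul_apply, hF.map_add, hG.map_add, smul_add]
    abel
  · simp only [Pi.add_apply, Pi.smul_apply, hF.map_smul, hG.map_smul, smul_add, smul_comm c]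
  · simpa only [Pi.add_apply, Pi.smul_apply, hF1, hG1, smul_eq_mul, mul_one] using hst
  · exact add_nonneg (mul_nonneg hs (hFpos m hm)) (mul_nonneg ht (hGpos m hm))

lemma exists_mem_states_tendsto (hH : ArchimedeanFamily H) {I : Type*} (U : Ultrafilter I)
    {L : I → A → ℝ} (hlin : ∀ i, IsLinearMap ℝ (L i)) (hone : ∀ᶠ i in U, L i 1 = 1)
    (hpos : ∀ m ∈ quadraticModule H, ∀ᶠ i in U, 0 ≤ L i m) :
    ∃ F ∈ states H, Tendsto L U (𝓝 F) := by
  have upper (a : A) : ∃ c, ∀ᶠ i in U, L i a ≤ c := by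
    obtain ⟨c, hc⟩ := hH a
    refine ⟨c, ?_⟩
    filter_upwards [hone, hpos _ hc] with i h1 h2
    rw [(hlin i).map_sub, Algebra.algebraMap_eq_smul_one, (hlin i).map_smul, h1, smul_eq_mul,
      mul_one] at h2
    linarith
  have limit (a : A) : ∃ l, Tendsto (fun i => L i a) U (𝓝 l) := by
    obtain ⟨c, hc⟩ := upper a
    obtain ⟨d, hd⟩ := upper (-a)
    have bounded : Icc (-d) c ∈ U.map (fun i => L i a) := by
      rw [Ultrafilter.mem_map]
      filter_upwards [hc, hd] with i h1 h2
      rw [(hlin i).map_neg] at h2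
      exact ⟨by linarith, h1⟩
    obtain ⟨l, -, hl⟩ := isCompact_Icc.ultrafilter_le_nhds _ (le_principal_iff.2 bounded)
    exact ⟨l, hl⟩
  choose F hF using limit
  refine ⟨F, ⟨⟨fun a b => ?_, fun c a => ?_⟩, ?_, fun m hm => ge_of_tendsto (hF m) (hpos m hm)⟩,
    tendsto_pi_nhds.2 hF⟩
  · refine tendsto_nhds_unique (hF (a + b)) (((hF a).add (hF b)).congr fun i => ?_)
    rw [(hlin i).map_add]
  · refine tendsto_nhds_unique (hF (c • a)) (((hF a).const_smul c).congr fun i => ?_)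
    rw [(hlin i).map_smul]
  · exact tendsto_nhds_unique (hF 1) (tendsto_const_nhds.congr' (hone.mono fun _ h => h.symm))

lemma isCompact_states (hH : ArchimedeanFamily H) : IsCompact (states H) := by
  rw [isCompact_iff_compactSpace, ← isCompact_univ_iff, isCompact_iff_ultrafilter_le_nhds]
  intro U _
  obtain ⟨F, hF, hlim⟩ := exists_mem_states_tendsto hH U (L := Subtype.val) (fun G => G.2.1)
    (.of_forall fun G => G.2.2.1) fun m hm => .of_forall fun G => G.2.2.2 m hm
  exact ⟨⟨F, hF⟩, mem_univ _, tendsto_subtype_rng.2 hlim⟩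

lemma sq_apply_mul_le (hF : F ∈ states H) (u : A) {m : A} (hm : m ∈ quadraticModule H) :
    F (u * m) ^ 2 ≤ F m * F (u ^ 2 * m) := by
  have quadratic (x : ℝ) : 0 ≤ F m * (x * x) + 2 * F (u * m) * x + F (u ^ 2 * m) := by
    have expand : (x • (1 : A) + u) ^ 2 * m
        = (x * x) • m + ((2 * x) • (u * m) + u ^ 2 * m) := by
      simp only [Algebra.smul_def, map_mul, map_ofNat]
      ring
    have := hF.2.2 _ (sq_mul_mem_quadraticModule (x • (1 : A) + u) hm)
    rw [expand, hF.1.map_add, hF.1.map_add, hF.1.map_smul, hF.1.map_smul, smul_eq_mul,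
      smul_eq_mul] at this
    linarith
  have := discrim_le_zero quadratic
  rw [discrim] at this
  linarith

lemma le_of_forall_exists_sq_le {S : Set ℝ} (hS : BddAbove S) {c : ℝ} (hc : 0 ≤ c)
    (h : ∀ x ∈ S, ∃ y ∈ S, x ^ 2 ≤ c * y) : ∀ x ∈ S, x ≤ c := by
  by_contra! hlt
  obtain ⟨x₀, hx₀, hcx₀⟩ := hlt
  have hs : c < sSup S := hcx₀.trans_le (le_csSup hS hx₀)
  obtain ⟨x, hx, hlt⟩ := exists_lt_of_lt_csSup ⟨x₀, hx₀⟩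
    (show √(c * sSup S) < sSup S from (Real.sqrt_lt' (hc.trans_lt hs)).2 (by nlinarith))
  obtain ⟨y, hy, hxy⟩ := h x hx
  have := (Real.sqrt_lt' ((Real.sqrt_nonneg _).trans_lt hlt)).1 hlt
  have := mul_le_mul_of_nonneg_left (le_csSup hS hy) hc
  linarith

lemma abs_apply_mul_le (hH : ArchimedeanFamily H) (hF : F ∈ states H) {t : A}
    (ht : 1 - t ^ 2 ∈ quadraticModule H) {m : A} (hm : m ∈ quadraticModule H) :
    |F (t * m)| ≤ F m := by
  have hm0 : 0 ≤ F m := hF.2.2 m hm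
  -- Cauchy–Schwarz gives `F (u ^ 2 * m) ^ 2 ≤ F m * F (u ^ 4 * m)`, so the supremum `M` of
  -- `F (u ^ 2 * m)` over all contractions `u` satisfies `M ^ 2 ≤ F m * M`.
  let S : Set ℝ := {x | ∃ u, 1 - u ^ 2 ∈ quadraticModule H ∧ x = F (u ^ 2 * m)}
  have bddAbove : BddAbove S := by
    obtain ⟨c, hc⟩ := hH m
    refine ⟨max c 0, ?_⟩
    rintro _ ⟨u, hu, rfl⟩
    refine le_of_algebraMap_sub_mem hF ?_
    have split : algebraMap ℝ A (max c 0) - u ^ 2 * m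
        = max c 0 • (1 - u ^ 2)
          + u ^ 2 * (algebraMap ℝ A (max c 0 - c) + (algebraMap ℝ A c - m)) := by
      rw [Algebra.smul_def, map_sub]
      ring
    rw [split]
    exact add_mem (smul_mem_quadraticModule (le_max_right c 0) hu) (sq_mul_mem_quadraticModule u
      (add_mem (algebraMap_mem_quadraticModule (sub_nonneg.2 (le_max_left c 0))) hc))
  have squares : ∀ x ∈ S, ∃ y ∈ S, x ^ 2 ≤ F m * y := by
    rintro _ ⟨u, hu, rfl⟩
    refine ⟨_, ⟨u ^ 2, ?_, rfl⟩, sq_apply_mul_le hF _ hm⟩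
    have split : 1 - (u ^ 2) ^ 2 = (1 - u ^ 2) + u ^ 2 * (1 - u ^ 2) := by ring
    rw [split]
    exact add_mem hu (sq_mul_mem_quadraticModule u hu)
  have bound : F (t ^ 2 * m) ≤ F m :=
    le_of_forall_exists_sq_le bddAbove hm0 squares _ ⟨t, ht, rfl⟩
  refine abs_le_of_sq_le_sq ?_ hm0
  nlinarith [sq_apply_mul_le hF t hm]

lemma inv_smul_add_smul_mem_states (hF : F ∈ states H) {G : A → ℝ} (hG : IsLinearMap ℝ G)
    (hle : ∀ m ∈ quadraticModule H, |G m| ≤ F m) {s : ℝ} (hs : |s| < 1) :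
    0 < (F + s • G) 1 ∧ ((F + s • G) 1)⁻¹ • (F + s • G) ∈ states H := by
  obtain ⟨hlin, hF1, hpos⟩ := hF
  have lower {m : A} (hm : m ∈ quadraticModule H) : (1 - |s|) * F m ≤ (F + s • G) m := by
    have : |s * G m| ≤ |s| * F m := by
      rw [abs_mul]
      exact mul_le_mul_of_nonneg_left (hle m hm) (abs_nonneg s)
    have := neg_le_of_abs_le this
    simp only [Pi.add_apply, Pi.smul_apply, smul_eq_mul]
    linarith
  have one_pos : 0 < (F + s • G) 1 := by
    have := lower one_mem_quadraticModule
    rw [hF1] at this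
    linarith
  refine ⟨one_pos, inv_smul_mem_states ⟨fun a b => ?_, fun c a => ?_⟩ one_pos fun m hm =>
    (mul_nonneg (sub_nonneg.2 hs.le) (hpos m hm)).trans (lower hm)⟩
  · simp only [Pi.add_apply, Pi.smul_apply, hlin.map_add, hG.map_add, smul_add]
    abel
  · simp only [Pi.add_apply, Pi.smul_apply, hlin.map_smul, hG.map_smul, smul_add, smul_comm c]

lemma eq_smul_of_mem_extremePoints_states (hF : F ∈ (states H).extremePoints ℝ) {G : A → ℝ}
    (hG : IsLinearMap ℝ G) (hle : ∀ m ∈ quadraticModule H, |G m| ≤ F m) : G = G 1 • F := by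
  obtain ⟨hp0, hp⟩ := inv_smul_add_smul_mem_states hF.1 hG hle (s := 2⁻¹) (by norm_num [abs_lt])
  obtain ⟨hn0, hn⟩ := inv_smul_add_smul_mem_states hF.1 hG hle (s := -2⁻¹) (by norm_num [abs_lt])
  have hF1 : F 1 = 1 := hF.1.2.1
  -- `F` lies strictly between the normalizations of `F + G / 2` and `F - G / 2`.
  have eq := hF.2 hp hn
    ⟨2⁻¹ * (F + (2⁻¹ : ℝ) • G) 1, 2⁻¹ * (F + (-2⁻¹ : ℝ) • G) 1, by positivity, by positivity, by
      simp only [Pi.add_apply, Pi.smul_apply, smul_eq_mul, hF1]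
      ring, by
      rw [mul_smul, mul_smul, smul_inv_smul₀ hp0.ne', smul_inv_smul₀ hn0.ne']
      module⟩
  rw [inv_smul_eq_iff₀ hp0.ne'] at eq
  funext a
  have := congrFun eq a
  simp only [Pi.add_apply, Pi.smul_apply, smul_eq_mul, hF1] at this ⊢
  linarith

lemma map_mul_of_mem_extremePoints_states (hH : ArchimedeanFamily H)
    (hF : F ∈ (states H).extremePoints ℝ) (a b : A) : F (a * b) = F a * F b := by
  have hlin := hF.1.1
  obtain ⟨c, hc⟩ := hH (a ^ 2)
  obtain ⟨r, hr, hrc⟩ : ∃ r : ℝ, r ≠ 0 ∧ c ≤ r ^ 2 :=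
    ⟨√(max c 1), by positivity, by
      rw [Real.sq_sqrt (by positivity)]
      exact le_max_left c 1⟩
  have contraction : 1 - (r⁻¹ • a) ^ 2 ∈ quadraticModule H := by
    have rescale : 1 - (r⁻¹ • a) ^ 2
        = (r⁻¹ ^ 2) • (algebraMap ℝ A (r ^ 2 - c) + (algebraMap ℝ A c - a ^ 2)) := by
      rw [map_sub, sub_add_sub_cancel, smul_sub, smul_pow, Algebra.algebraMap_eq_smul_one,
        smul_smul, ← mul_pow, inv_mul_cancel₀ hr, one_pow, one_smul]
    rw [rescale]
    exact smul_mem_quadraticModule (sq_nonneg _)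
      (add_mem (algebraMap_mem_quadraticModule (sub_nonneg.2 hrc)) hc)
  have hG : IsLinearMap ℝ fun b => F (r⁻¹ • a * b) :=
    ⟨fun x y => by rw [mul_add, hlin.map_add], fun d x => by rw [mul_smul_comm, hlin.map_smul]⟩
  have := congrFun (eq_smul_of_mem_extremePoints_states hF hG
    fun m hm => abs_apply_mul_le hH hF.1 contraction hm) b
  simp only [Pi.smul_apply, smul_eq_mul, mul_one, smul_mul_assoc, hlin.map_smul, mul_assoc] at this
  exact mul_left_cancel₀ (inv_ne_zero hr) this

end States

section Representation

lemma exists_integral_eq_of_extremePoints {X I : Type*} [TopologicalSpace X] [CompactSpace X]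
    [T2Space X] [MeasurableSpace X] [BorelSpace X] (Φ : I → C(X, ℝ)) {s : Set (I → ℝ)}
    (hs : IsCompact s) (hconv : Convex ℝ s)
    (hext : ∀ F ∈ s.extremePoints ℝ, ∃ x, ∀ i, F i = Φ i x) {F : I → ℝ} (hF : F ∈ s) :
    ∃ μ : ProbabilityMeasure X, ∀ i, F i = ∫ x, Φ i x ∂μ := by
  let T : ProbabilityMeasure X → I → ℝ := fun μ i => ∫ x, Φ i x ∂μ
  have integrable (i : I) (μ : Measure X) [IsFiniteMeasure μ] : Integrable (Φ i) μ :=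
    (Φ i).continuous.integrable_of_hasCompactSupport (HasCompactSupport.of_compactSpace _)
  have isCompact_range : IsCompact (range T) := isCompact_range <| continuous_pi fun i =>
    ProbabilityMeasure.continuous_integral_continuousMap (Φ i)
  have convex_range : Convex ℝ (range T) := by
    rintro _ ⟨μ, rfl⟩ _ ⟨ν, rfl⟩ a b ha hb hab
    lift a to NNReal using ha
    lift b to NNReal using hb
    have prob : IsProbabilityMeasure (a • (μ : Measure X) + b • (ν : Measure X)) :=
      ⟨by simp [← ENNReal.coe_add, ← NNReal.coe_inj, hab]⟩
    refine ⟨⟨_, prob⟩, funext fun i => ?_⟩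
    simp only [T, ProbabilityMeasure.coe_mk, Pi.add_apply, Pi.smul_apply]
    rw [integral_add_measure ((integrable i μ).smul_measure_nnreal)
      ((integrable i ν).smul_measure_nnreal), integral_smul_nnreal_measure,
      integral_smul_nnreal_measure]
    rfl
  have extremePoints_subset : s.extremePoints ℝ ⊆ range T := by
    intro G hG
    obtain ⟨x, hx⟩ := hext G hG
    refine ⟨diracProba x, funext fun i => ?_⟩
    rw [hx i]
    exact integral_dirac _ x
  have subset_range : s ⊆ range T := by
    rw [← closure_convexHull_extremePoints hs hconv]
    exact closure_minimal (convexHull_min extremePoints_subset convex_range)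
      isCompact_range.isClosed
  obtain ⟨μ, rfl⟩ := subset_range hF
  exact ⟨μ, fun i => rfl⟩

variable {σ ι : Type*} {H : ι → MvPolynomial σ ℝ}

variable (H) in
/-- The basic closed semialgebraic set defined by the polynomial inequalities `0 ≤ H j`. -/
def nonnegSet : Set (σ → ℝ) :=
  {v | ∀ j, 0 ≤ eval v (H j)}

lemma eval_nonneg_of_mem_quadraticModule {v : σ → ℝ} (hv : v ∈ nonnegSet H)
    {q : MvPolynomial σ ℝ} (hq : q ∈ quadraticModule H) : 0 ≤ eval v q := by
  induction hq using AddSubmonoid.closure_induction with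
  | mem q hq =>
    rcases hq with ⟨a, rfl⟩ | ⟨j, a, rfl⟩
    · rw [map_pow]
      positivity
    · rw [map_mul, map_pow]
      exact mul_nonneg (hv j) (sq_nonneg _)
  | zero => rw [map_zero]
  | add q r _ _ hq hr => rw [map_add]; exact add_nonneg hq hr

lemma isClosed_nonnegSet : IsClosed (nonnegSet H) := by
  simp only [nonnegSet, ofPred_forall]
  exact isClosed_iInter fun j => isClosed_le continuous_const (continuous_eval (H j))

lemma isCompact_nonnegSet (hH : ArchimedeanFamily H) : IsCompact (nonnegSet H) := by
  have bound (i : σ) : ∃ c, ∀ v ∈ nonnegSet H, v i ∈ Icc (-c) c := by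
    obtain ⟨c, hc⟩ := hH (X i ^ 2)
    refine ⟨√c, fun v hv => abs_le.1 (Real.abs_le_sqrt ?_)⟩
    simpa [sub_nonneg] using eval_nonneg_of_mem_quadraticModule hv hc
  choose c hc using bound
  exact (isCompact_univ_pi fun i => isCompact_Icc).of_isClosed_subset isClosed_nonnegSet
    fun v hv i _ => hc i v hv

lemma exists_eval_eq_of_mem_extremePoints_states (hH : ArchimedeanFamily H)
    {F : MvPolynomial σ ℝ → ℝ} (hF : F ∈ (states H).extremePoints ℝ) :
    ∃ v ∈ nonnegSet H, ∀ q, F q = eval v q := by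
  obtain ⟨hlin, hF1, hpos⟩ := hF.1
  let χ : MvPolynomial σ ℝ →ₐ[ℝ] ℝ :=
    AlgHom.ofLinearMap (hlin.mk' F) hF1 (map_mul_of_mem_extremePoints_states hH hF)
  have eval_eq (q : MvPolynomial σ ℝ) : F q = eval (fun i => F (X i)) q := by
    have := DFunLike.congr_fun (aeval_unique χ) q
    rwa [← coe_aeval_eq_eval]
  refine ⟨_, fun j => ?_, eval_eq⟩
  rw [← eval_eq, ← mul_one (H j), ← one_pow 2]
  exact hpos _ (mul_sq_mem_quadraticModule j 1)

variable (σ) in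
/-- Polynomials as continuous functions on `σ → ℝ`. -/
def polyContinuousMap : MvPolynomial σ ℝ →ₐ[ℝ] C(σ → ℝ, ℝ) where
  toFun q := ⟨fun v => eval v q, continuous_eval q⟩
  map_one' := by ext; simp
  map_mul' _ _ := by ext; simp
  map_zero' := by ext; simp
  map_add' _ _ := by ext; simp
  commutes' _ := by ext; simp

theorem exists_measure_integral_eq_of_mem_states [Finite σ] (hH : ArchimedeanFamily H)
    {F : MvPolynomial σ ℝ → ℝ} (hF : F ∈ states H) :
    ∃ μ : Measure (σ → ℝ), IsProbabilityMeasure μ ∧ (∀ᵐ v ∂μ, v ∈ nonnegSet H) ∧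
      ∀ q, F q = ∫ v, eval v q ∂μ := by
  have : CompactSpace (nonnegSet H) := isCompact_iff_compactSpace.1 (isCompact_nonnegSet hH)
  obtain ⟨ν, hν⟩ := exists_integral_eq_of_extremePoints
    (fun q => (polyContinuousMap σ q).restrict (nonnegSet H)) (isCompact_states hH) convex_states
    (fun G hG => by
      obtain ⟨v, hv, hGv⟩ := exists_eval_eq_of_mem_extremePoints_states hH hG
      exact ⟨⟨v, hv⟩, hGv⟩) hF
  refine ⟨(ν : Measure (nonnegSet H)).map Subtype.val,
    Measure.isProbabilityMeasure_map measurable_subtype_coe.aemeasurable, ?_, fun q => ?_⟩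
  · rw [ae_map_iff (p := (· ∈ nonnegSet H)) measurable_subtype_coe.aemeasurable
      isClosed_nonnegSet.measurableSet]
    exact .of_forall Subtype.property
  · rw [integral_map measurable_subtype_coe.aemeasurable
      (continuous_eval q).aestronglyMeasurable]
    exact hν q

end Representation

section Determinacy

variable {σ : Type*}

lemma exists_eval_near_of_isCompact (g : C(σ → ℝ, ℝ)) {S : Set (σ → ℝ)} (hS : IsCompact S)
    {ε : ℝ} (hε : 0 < ε) : ∃ q : MvPolynomial σ ℝ, ∀ v ∈ S, |eval v q - g v| < ε := by
  have separates : (polyContinuousMap σ).range.SeparatesPoints := by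
    intro v w hvw
    obtain ⟨i, hi⟩ := Function.ne_iff.1 hvw
    exact ⟨_, ⟨_, ⟨X i, rfl⟩, rfl⟩, by simpa [polyContinuousMap] using hi⟩
  obtain ⟨_, ⟨q, rfl⟩, hq⟩ :=
    ContinuousMap.exists_mem_subalgebra_near_continuous_of_isCompact_of_separatesPoints
      separates g hS hε
  exact ⟨q, hq⟩

lemma integrable_of_ae_mem_isCompact {X : Type*} [TopologicalSpace X] [T2Space X]
    [MeasurableSpace X] [OpensMeasurableSpace X] {μ : Measure X} [IsFiniteMeasure μ] {S : Set X}
    (hS : IsCompact S) (hμ : ∀ᵐ x ∂μ, x ∈ S) {g : X → ℝ} (hg : Continuous g) : Integrable g μ := by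
  rw [← Measure.restrict_eq_self_of_ae_mem hμ]
  exact hg.continuousOn.integrableOn_compact hS

theorem measure_ext_of_integral_eval_eq [Finite σ] {μ ν : Measure (σ → ℝ)} [IsFiniteMeasure μ]
    [IsFiniteMeasure ν] {S : Set (σ → ℝ)} (hS : IsCompact S) (hμ : ∀ᵐ v ∂μ, v ∈ S)
    (hν : ∀ᵐ v ∂ν, v ∈ S)
    (h : ∀ q : MvPolynomial σ ℝ, ∫ v, eval v q ∂μ = ∫ v, eval v q ∂ν) : μ = ν := by
  refine ext_of_forall_integral_eq_of_IsFiniteMeasure fun g => eq_of_forall_dist_le fun ε hε => ?_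
  let M : ℝ := μ.real univ + ν.real univ + 1
  have hM : 0 < M := by positivity
  obtain ⟨q, hq⟩ := exists_eval_near_of_isCompact (g : C(σ → ℝ, ℝ)) hS (div_pos hε hM)
  have near (ρ : Measure (σ → ℝ)) [IsFiniteMeasure ρ] (hρ : ∀ᵐ v ∂ρ, v ∈ S) :
      dist (∫ v, eval v q ∂ρ) (∫ v, g v ∂ρ) ≤ ε / M * ρ.real univ := by
    rw [dist_eq_norm, ← integral_sub (integrable_of_ae_mem_isCompact hS hρ (continuous_eval q))
      (integrable_of_ae_mem_isCompact hS hρ g.continuous)]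
    exact norm_integral_le_of_norm_le_const (hρ.mono fun v hv => (hq v hv).le)
  calc dist (∫ v, g v ∂μ) (∫ v, g v ∂ν)
      ≤ dist (∫ v, g v ∂μ) (∫ v, eval v q ∂μ) + dist (∫ v, eval v q ∂μ) (∫ v, g v ∂ν) :=
        dist_triangle _ _ _
    _ ≤ ε / M * μ.real univ + ε / M * ν.real univ :=
        add_le_add (dist_comm (∫ v, g v ∂μ) _ ▸ near μ hμ) (h q ▸ near ν hν)
    _ = ε * ((μ.real univ + ν.real univ) / M) := by ring
    _ ≤ ε := mul_le_of_le_one_right hε.le <| (div_le_one hM).2 (by simp only [M]; linarith)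

end Determinacy

lemma exists_linearMap_ge_of_superlinear {E : Type*} [AddCommGroup E] [Module ℝ E] {P : E → ℝ}
    (hsmul : ∀ c : ℝ, 0 < c → ∀ x, P (c • x) = c * P x) (hadd : ∀ x y, P x + P y ≤ P (x + y))
    (x₀ : E) : ∃ L : E →ₗ[ℝ] ℝ, L x₀ = P x₀ ∧ ∀ x, P x ≤ L x := by
  have map_zero : P 0 = 0 := by
    have := hsmul 2 two_pos 0
    rw [smul_zero] at this
    linarith
  have well_defined (c : ℝ) (hc : c • x₀ = 0) : RingHom.id ℝ c • P x₀ = 0 := by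
    rcases smul_eq_zero.1 hc with rfl | rfl <;> simp [map_zero]
  have dominated (c : ℝ) : c * P x₀ ≤ -P (-(c • x₀)) := by
    rcases lt_trichotomy c 0 with hc | rfl | hc
    · rw [← neg_smul, hsmul _ (neg_pos.2 hc)]
      linarith
    · simp [map_zero]
    · have := hadd x₀ (-x₀)
      rw [add_neg_cancel, map_zero] at this
      rw [← smul_neg, hsmul c hc]
      nlinarith
  let f := LinearPMap.mkSpanSingleton' x₀ (P x₀) well_defined
  obtain ⟨L, hLf, hL⟩ := exists_extension_of_le_sublinear f (fun x => -P (-x))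
    (fun c hc x => by rw [← smul_neg, hsmul c hc, mul_neg])
    (fun x y => by
      have := hadd (-x) (-y)
      rw [neg_add]
      linarith)
    (by
      rintro ⟨_, hx⟩
      obtain ⟨c, rfl⟩ := Submodule.mem_span_singleton.1 hx
      rw [LinearPMap.mkSpanSingleton'_apply]
      exact dominated c)
  refine ⟨L, ?_, fun x => ?_⟩
  · exact (hLf ⟨x₀, Submodule.mem_span_singleton_self x₀⟩).trans
      (LinearPMap.mkSpanSingleton'_apply_self _ _ _ _)
  · simpa using hL (-x)

section FiberMin

/-- The minimum of `g` over the part of `K` lying above `y`: the optimal value function of the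
parametric problem of minimizing `g` over the fibers of `π`. It has the junk value `0` where the
fiber is empty. -/
def fiberMin {Ω B : Type*} (K : Set Ω) (π : Ω → B) (g : Ω → ℝ) (y : B) : ℝ :=
  sInf (g '' (K ∩ π ⁻¹' {y}))

lemma fiberMin_of_notMem {Ω B : Type*} {K : Set Ω} {π : Ω → B} {g : Ω → ℝ} {y : B}
    (hy : y ∉ π '' K) : fiberMin K π g y = 0 := by
  have empty_fiber : K ∩ π ⁻¹' {y} = ∅ :=
    eq_empty_of_forall_notMem fun ω hω => hy ⟨ω, hω.1, hω.2⟩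
  rw [fiberMin, empty_fiber, image_empty, Real.sInf_empty]

variable {Ω B : Type*} [TopologicalSpace Ω] [TopologicalSpace B] {K : Set Ω} {π : C(Ω, B)}

lemma fiberMin_le (hK : IsCompact K) (g : C(Ω, ℝ)) {ω : Ω} (hω : ω ∈ K) :
    fiberMin K π g (π ω) ≤ g ω :=
  csInf_le ((hK.image g.continuous).bddBelow.mono (image_mono inter_subset_left))
    ⟨ω, ⟨hω, rfl⟩, rfl⟩

lemma fiberMin_smul {c : ℝ} (hc : 0 ≤ c) (g : C(Ω, ℝ)) (y : B) :
    fiberMin K π ⇑(c • g) y = c * fiberMin K π g y := by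
  rw [← smul_eq_mul, fiberMin, fiberMin, ← Real.sInf_smul_of_nonneg hc, ← image_smul, image_image]
  rfl

lemma exists_eq_fiberMin [T1Space B] (hK : IsCompact K) (g : C(Ω, ℝ)) {y : B} (hy : y ∈ π '' K) :
    ∃ ω ∈ K, π ω = y ∧ g ω = fiberMin K π g y := by
  obtain ⟨ω₀, hω₀, rfl⟩ := hy
  have isCompact_fiber : IsCompact (K ∩ π ⁻¹' {π ω₀}) :=
    hK.inter_right (isClosed_singleton.preimage π.continuous)
  obtain ⟨ω, ⟨hω, hωy⟩, hmin⟩ :=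
    (isCompact_fiber.image g.continuous).sInf_mem ⟨_, ω₀, ⟨hω₀, rfl⟩, rfl⟩
  exact ⟨ω, hω, hωy, hmin⟩

lemma fiberMin_add_le [T1Space B] (hK : IsCompact K) (g h : C(Ω, ℝ)) {y : B} (hy : y ∈ π '' K) :
    fiberMin K π g y + fiberMin K π h y ≤ fiberMin K π ⇑(g + h) y := by
  obtain ⟨ω, hω, rfl, hmin⟩ := exists_eq_fiberMin hK (g + h) hy
  rw [← hmin]
  exact add_le_add (fiberMin_le hK g hω) (fiberMin_le hK h hω)

variable [T2Space B] [MeasurableSpace B] [BorelSpace B]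

lemma measurable_fiberMin (hK : IsCompact K) (g : C(Ω, ℝ)) : Measurable (fiberMin K π g) := by
  refine measurable_of_Iic fun c => ?_
  have isCompact_sublevel : IsCompact (π '' (K ∩ g ⁻¹' Iic c)) :=
    (hK.inter_right (isClosed_Iic.preimage g.continuous)).image π.continuous
  have preimage_eq : fiberMin K π g ⁻¹' Iic c
      = π '' (K ∩ g ⁻¹' Iic c) ∪ (π '' K)ᶜ ∩ {_y | 0 ≤ c} := by
    ext y
    by_cases hy : y ∈ π '' K
    · obtain ⟨ω, hω, rfl, hmin⟩ := exists_eq_fiberMin hK g hy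
      refine ⟨fun h => .inl ⟨ω, ⟨hω, hmin.trans_le h⟩, rfl⟩, ?_⟩
      rintro (⟨ω', ⟨hω', hle⟩, heq⟩ | ⟨hn, -⟩)
      · exact heq ▸ (fiberMin_le hK g hω').trans hle
      · exact absurd hy hn
    · rw [mem_preimage, fiberMin_of_notMem hy]
      exact ⟨fun h => .inr ⟨hy, h⟩,
        fun h => h.elim (fun h => absurd (image_mono inter_subset_left h) hy) And.right⟩
  rw [preimage_eq]
  exact isCompact_sublevel.isClosed.measurableSet.union
    ((hK.image π.continuous).isClosed.measurableSet.compl.inter (.const _))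

lemma integrable_fiberMin (hK : IsCompact K) (g : C(Ω, ℝ)) {φ : Measure B} [IsFiniteMeasure φ]
    (hφ : ∀ᵐ y ∂φ, y ∈ π '' K) : Integrable (fiberMin K π g) φ := by
  obtain ⟨c, hc⟩ := hK.exists_bound_of_continuousOn g.continuous.continuousOn
  refine .of_bound (measurable_fiberMin hK g).aestronglyMeasurable c ?_
  filter_upwards [hφ] with y hy
  obtain ⟨ω, hω, -, hmin⟩ := exists_eq_fiberMin hK g hy
  exact hmin ▸ hc ω hω

theorem exists_linearMap_eq_integral_fiberMin (hK : IsCompact K) {φ : Measure B}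
    [IsFiniteMeasure φ] (hφ : ∀ᵐ y ∂φ, y ∈ π '' K) (g : C(Ω, ℝ)) :
    ∃ L : C(Ω, ℝ) →ₗ[ℝ] ℝ, L g = ∫ y, fiberMin K π g y ∂φ ∧
      (∀ h : C(Ω, ℝ), (∀ ω ∈ K, 0 ≤ h ω) → 0 ≤ L h) ∧
      ∀ u : C(B, ℝ), L (u.comp π) = ∫ y, u y ∂φ := by
  obtain ⟨L, hLg, hL⟩ := exists_linearMap_ge_of_superlinear
    (P := fun h : C(Ω, ℝ) => ∫ y, fiberMin K π h y ∂φ)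
    (fun c hc h => by simp only [fiberMin_smul hc.le, integral_const_mul])
    (fun h₁ h₂ => by
      rw [← integral_add (integrable_fiberMin hK h₁ hφ) (integrable_fiberMin hK h₂ hφ)]
      exact integral_mono_ae ((integrable_fiberMin hK h₁ hφ).add (integrable_fiberMin hK h₂ hφ))
        (integrable_fiberMin hK _ hφ) (hφ.mono fun y hy => fiberMin_add_le hK h₁ h₂ hy)) g
  have integral_comp_le (u : C(B, ℝ)) : ∫ y, u y ∂φ ≤ L (u.comp π) := by
    refine (integral_congr_ae ?_).trans_le (hL (u.comp π))
    filter_upwards [hφ] with y hy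
    obtain ⟨ω, -, rfl, hmin⟩ := exists_eq_fiberMin hK (u.comp π) hy
    exact hmin
  refine ⟨L, hLg, fun h hh => ?_, fun u => le_antisymm ?_ (integral_comp_le u)⟩
  · refine (integral_nonneg_of_ae ?_).trans (hL h)
    filter_upwards [hφ] with y hy
    obtain ⟨ω, hω, -, hmin⟩ := exists_eq_fiberMin hK h hy
    exact hmin ▸ hh ω hω
  · have := integral_comp_le (-u)
    rw [ContinuousMap.neg_comp, map_neg] at this
    simp only [ContinuousMap.neg_apply, integral_neg] at this
    linarith

variable [MeasurableSpace Ω] [BorelSpace Ω] [T2Space Ω] {μ : Measure Ω} [IsFiniteMeasure μ]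

lemma ae_eq_fiberMin_of_integral_le (hK : IsCompact K) (hμ : ∀ᵐ ω ∂μ, ω ∈ K) (g : C(Ω, ℝ))
    (hle : ∫ ω, g ω ∂μ ≤ ∫ y, fiberMin K π g y ∂μ.map π) :
    ∀ᵐ ω ∂μ, g ω = fiberMin K π g (π ω) := by
  have hπ : AEMeasurable π μ := π.continuous.aemeasurable
  have ae_mem_image : ∀ᵐ y ∂μ.map π, y ∈ π '' K :=
    (ae_map_iff hπ (hK.image π.continuous).isClosed.measurableSet).2
      (hμ.mono fun ω hω => mem_image_of_mem π hω)
  have integrable_min : Integrable (fun ω => fiberMin K π g (π ω)) μ :=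
    (integrable_fiberMin hK g ae_mem_image).comp_aemeasurable hπ
  have integrable_g : Integrable g μ := integrable_of_ae_mem_isCompact hK hμ g.continuous
  have min_le : (fun ω => fiberMin K π g (π ω)) ≤ᵐ[μ] g := hμ.mono fun ω => fiberMin_le hK g
  rw [integral_map hπ (measurable_fiberMin hK g).aestronglyMeasurable] at hle
  have := (integral_eq_iff_of_ae_le integrable_min integrable_g min_le).1
    (le_antisymm (integral_mono_ae integrable_min integrable_g min_le) hle)
  exact this.mono fun ω h => h.symm

theorem integral_eq_of_integral_le_fiberMin (hK : IsCompact K) (hμ : ∀ᵐ ω ∂μ, ω ∈ K) (g : C(Ω, ℝ))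
    (hle : ∫ ω, g ω ∂μ ≤ ∫ y, fiberMin K π g y ∂μ.map π) {q : Ω → ℝ} {b : B → ℝ}
    (hb : AEStronglyMeasurable b (μ.map π))
    (hq : ∀ᵐ y ∂μ.map π, ∀ ω ∈ K, π ω = y → g ω = fiberMin K π g y → q ω = b y) :
    ∫ ω, q ω ∂μ = ∫ y, b y ∂μ.map π := by
  have hπ : AEMeasurable π μ := π.continuous.aemeasurable
  rw [integral_map hπ hb]
  refine integral_congr_ae ?_
  filter_upwards [hμ, ae_of_ae_map hπ hq, ae_eq_fiberMin_of_integral_le hK hμ g hle]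
    with ω hω h hmin
  exact h ω hω rfl hmin

end FiberMin

section MomentRelaxation

variable {n p : ℕ}

variable (n p) in
/-- The projection `(x, y) ↦ y` from the decision and parameter variables to the parameters. -/
def parameterProj : C(Fin n ⊕ Fin p → ℝ, Fin p → ℝ) :=
  ⟨fun v => v ∘ Sum.inr, by fun_prop⟩

lemma Lz_eq_constr (z : (Fin n → ℕ) → (Fin p → ℕ) → ℝ) :
    Lz n p z = (basisMonomials (Fin n ⊕ Fin p) ℝ).constr ℝ
      fun d => z (fun k => d (Sum.inl k)) fun l => d (Sum.inr l) := by
  funext q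
  rw [Module.Basis.constr_apply]
  rfl

lemma isLinearMap_Lz (z : (Fin n → ℕ) → (Fin p → ℕ) → ℝ) : IsLinearMap ℝ (Lz n p z) :=
  Lz_eq_constr z ▸ LinearMap.isLinear _

lemma Lz_monomial (z : (Fin n → ℕ) → (Fin p → ℕ) → ℝ) (d : Fin n ⊕ Fin p →₀ ℕ) :
    Lz n p z (monomial d 1) = z (fun k => d (Sum.inl k)) fun l => d (Sum.inr l) := by
  rw [Lz_eq_constr]
  exact Module.Basis.constr_basis _ _ _ d

lemma Lz_X_inl (z : (Fin n → ℕ) → (Fin p → ℕ) → ℝ) (k : Fin n) :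
    Lz n p z (X (Sum.inl k)) = z (fun j => if j = k then 1 else 0) fun _ => 0 := by
  rw [X, Lz_monomial]
  congr 1
  · funext j
    simp [Finsupp.single_apply, eq_comm]
  · funext l
    simp

/-- The sequence of moments of a linear functional on polynomials. -/
def momentSeq (L : MvPolynomial (Fin n ⊕ Fin p) ℝ →ₗ[ℝ] ℝ) (α : Fin n → ℕ) (β : Fin p → ℕ) : ℝ :=
  L (monomial (Finsupp.equivFunOnFinite.symm (Sum.elim α β)) 1)

lemma Lz_momentSeq (L : MvPolynomial (Fin n ⊕ Fin p) ℝ →ₗ[ℝ] ℝ) : Lz n p (momentSeq L) = L := by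
  rw [Lz_eq_constr]
  congr 1
  refine (basisMonomials _ ℝ).ext fun d => ?_
  have exponent_eq : Finsupp.equivFunOnFinite.symm
      (Sum.elim (fun k => d (Sum.inl k)) fun l => d (Sum.inr l)) = d :=
    Finsupp.ext fun i => by cases i <;> rfl
  rw [Module.Basis.constr_basis, momentSeq, coe_basisMonomials, exponent_eq]

lemma degOK_of_totalDegree_le {i : ℕ} {q : MvPolynomial (Fin n ⊕ Fin p) ℝ}
    (h : q.totalDegree ≤ i) : DegOK n p i q := by
  intro d hd
  have := le_totalDegree hd
  rw [Finsupp.sum_fintype _ _ fun _ => rfl, Fintype.sum_sum_type] at this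
  constructor <;> omega

variable {ι : Type*} [Fintype ι] {H : ι → MvPolynomial (Fin n ⊕ Fin p) ℝ}
  {γ : (Fin p → ℕ) → ℝ}

lemma archimedeanFamily_of_archimedeanQM (h : ArchimedeanQM n p H) : ArchimedeanFamily H := by
  obtain ⟨N, σ₀, σ, hσ₀, hσ, hN⟩ := h
  have sum_mem : C N - ∑ i, X i ^ 2 ∈ quadraticModule H := hN ▸ add_mem
    (mem_quadraticModule_of_isSumSq hσ₀)
    (sum_mem fun j _ => mul_mem_quadraticModule_of_isSumSq (hσ j) j)
  have X_mem (i : Fin n ⊕ Fin p) : X i ∈ boundedSubalgebra H := by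
    refine ⟨max N 0, le_max_right N 0, ?_⟩
    have split : algebraMap ℝ (MvPolynomial (Fin n ⊕ Fin p) ℝ) (max N 0) - X i ^ 2
        = algebraMap ℝ _ (max N 0 - N) + ((C N - ∑ j, X j ^ 2)
          + ∑ j ∈ Finset.univ.erase i, X j ^ 2) := by
      rw [← Finset.sum_erase_add _ _ (Finset.mem_univ i), map_sub, algebraMap_eq]
      ring
    rw [split]
    exact add_mem (algebraMap_mem_quadraticModule (sub_nonneg.2 (le_max_left N 0)))
      (add_mem sum_mem (_root_.sum_mem fun j _ => sq_mem_quadraticModule _))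
  refine archimedeanFamily_of_boundedSubalgebra_eq_top (top_le_iff.1 ?_)
  rw [← adjoin_range_X, Algebra.adjoin_le_iff]
  rintro _ ⟨i, rfl⟩
  exact X_mem i

lemma eventually_Lz_nonneg {q : MvPolynomial (Fin n ⊕ Fin p) ℝ} (hq : q ∈ quadraticModule H) :
    ∀ᶠ i in atTop, ∀ z, RelaxFeasible n p H γ i z → 0 ≤ Lz n p z q := by
  induction hq using AddSubmonoid.closure_induction with
  | mem q hq =>
    rcases hq with ⟨a, rfl⟩ | ⟨j, a, rfl⟩
    · filter_upwards [eventually_ge_atTop a.totalDegree] with i hi z hz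
      exact hz.1 a (degOK_of_totalDegree_le hi)
    · filter_upwards [eventually_ge_atTop (a.totalDegree + halfDeg (H j))] with i hi z hz
      exact hz.2.1 j a (degOK_of_totalDegree_le (by omega))
  | zero => exact .of_forall fun i z _ => (isLinearMap_Lz z).map_zero.ge
  | add q r _ _ hq hr =>
    filter_upwards [hq, hr] with i hq hr z hz
    rw [(isLinearMap_Lz z).map_add]
    exact add_nonneg (hq z hz) (hr z hz)

variable {φ : Measure (Fin p → ℝ)}

lemma Lz_one_of_relaxFeasible [IsProbabilityMeasure φ]
    (hγ : ∀ β, γ β = ∫ y, ∏ l, y l ^ β l ∂φ) {i : ℕ}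
    {z : (Fin n → ℕ) → (Fin p → ℕ) → ℝ} (hz : RelaxFeasible n p H γ i z) : Lz n p z 1 = 1 := by
  rw [← C_1, ← monomial_zero', Lz_monomial]
  exact (hz.2.2 0 (by simp)).trans (by simp [hγ])

lemma eventually_Lz_rename_inr [IsFiniteMeasure φ] {Y : Set (Fin p → ℝ)} (hY : IsCompact Y)
    (hφ : ∀ᵐ y ∂φ, y ∈ Y) (hγ : ∀ β, γ β = ∫ y, ∏ l, y l ^ β l ∂φ) (u : MvPolynomial (Fin p) ℝ) :
    ∀ᶠ i in atTop, ∀ z, RelaxFeasible n p H γ i z →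
      Lz n p z (rename Sum.inr u) = ∫ y, eval y u ∂φ := by
  induction u using MvPolynomial.induction_on' with
  | monomial d c =>
    filter_upwards [eventually_ge_atTop (∑ l, d l)] with i hi z hz
    have inl_eq : (fun k : Fin n => d.mapDomain Sum.inr (Sum.inl k)) = fun _ => 0 :=
      funext fun k => Finsupp.mapDomain_of_notMem_range _ _ (by simp)
    have inr_eq : (fun l => d.mapDomain (Sum.inr : Fin p → Fin n ⊕ Fin p) (Sum.inr l)) = d :=
      funext fun l => Finsupp.mapDomain_apply Sum.inr_injective _ _
    rw [rename_monomial, ← mul_one c, ← smul_eq_mul, ← smul_monomial, (isLinearMap_Lz z).map_smul,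
      Lz_monomial, inl_eq, inr_eq, hz.2.2 d (by omega), hγ, ← integral_smul]
    refine integral_congr_ae (.of_forall fun y => ?_)
    simp [eval_monomial, Finsupp.prod_fintype]
  | add u v hu hv =>
    filter_upwards [hu, hv] with i hu hv z hz
    rw [map_add, (isLinearMap_Lz z).map_add, hu z hz, hv z hz,
      ← integral_add (integrable_of_ae_mem_isCompact hY hφ (continuous_eval u))
        (integrable_of_ae_mem_isCompact hY hφ (continuous_eval v))]
    simp only [map_add]

theorem exists_relaxFeasible_of_isCompact [IsFiniteMeasure φ] (hK : IsCompact (nonnegSet H))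
    (hφ : ∀ᵐ y ∂φ, y ∈ parameterProj n p '' nonnegSet H)
    (hγ : ∀ β, γ β = ∫ y, ∏ l, y l ^ β l ∂φ) (f : MvPolynomial (Fin n ⊕ Fin p) ℝ) :
    ∃ z, (∀ i, RelaxFeasible n p H γ i z) ∧ Lz n p z f =
      ∫ y, fiberMin (nonnegSet H) (parameterProj n p) (fun v => eval v f) y ∂φ := by
  obtain ⟨L, hLf, hpos, hmarg⟩ := exists_linearMap_eq_integral_fiberMin hK hφ
    (polyContinuousMap _ f)
  let ℓ : MvPolynomial (Fin n ⊕ Fin p) ℝ →ₗ[ℝ] ℝ := L ∘ₗ (polyContinuousMap _).toLinearMap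
  have nonneg {q} (hq : q ∈ quadraticModule H) : 0 ≤ ℓ q :=
    hpos _ fun v hv => eval_nonneg_of_mem_quadraticModule hv hq
  refine ⟨momentSeq ℓ, fun i => ⟨fun q _ => ?_, fun j q _ => ?_, fun β _ => ?_⟩, ?_⟩
  · rw [Lz_momentSeq]
    exact nonneg (sq_mem_quadraticModule q)
  · rw [Lz_momentSeq]
    exact nonneg (mul_sq_mem_quadraticModule j q)
  · let u : C(Fin p → ℝ, ℝ) := ⟨fun y => ∏ l, y l ^ β l, by fun_prop⟩
    have monomial_eq : polyContinuousMap (Fin n ⊕ Fin p)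
        (monomial (Finsupp.equivFunOnFinite.symm (Sum.elim (fun _ => 0) β)) 1)
          = u.comp (parameterProj n p) := by
      ext v
      simp [polyContinuousMap, u, parameterProj, eval_monomial, Finsupp.prod_fintype]
    rw [hγ]
    exact (congrArg L monomial_eq).trans (hmarg u)
  · rw [Lz_momentSeq]
    exact hLf

lemma eventually_rhoSDP_le [IsProbabilityMeasure φ] (hH : ArchimedeanFamily H)
    (hφ : ∀ᵐ y ∂φ, y ∈ parameterProj n p '' nonnegSet H)
    (hγ : ∀ β, γ β = ∫ y, ∏ l, y l ^ β l ∂φ) (f : MvPolynomial (Fin n ⊕ Fin p) ℝ) :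
    ∀ᶠ i in atTop, rhoSDP n p H γ f i ≤
      ∫ y, fiberMin (nonnegSet H) (parameterProj n p) (fun v => eval v f) y ∂φ := by
  obtain ⟨c, hc⟩ := hH (-f)
  obtain ⟨z, hz, hzf⟩ := exists_relaxFeasible_of_isCompact (isCompact_nonnegSet hH) hφ hγ f
  filter_upwards [eventually_Lz_nonneg hc] with i hi
  refine hzf ▸ csInf_le ⟨-c, ?_⟩ ⟨z, hz i, rfl⟩
  rintro _ ⟨w, hw, rfl⟩
  have := hi w hw
  rw [Algebra.algebraMap_eq_smul_one, sub_neg_eq_add, (isLinearMap_Lz w).map_add,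
    (isLinearMap_Lz w).map_smul, Lz_one_of_relaxFeasible hγ hw, smul_eq_mul, mul_one] at this
  linarith

end MomentRelaxation

section Convergence

lemma map_parameterProj_eq {n p : ℕ} {K : Set (Fin n ⊕ Fin p → ℝ)} (hK : IsCompact K)
    {μ : Measure (Fin n ⊕ Fin p → ℝ)} [IsFiniteMeasure μ] (hμ : ∀ᵐ v ∂μ, v ∈ K)
    {φ : Measure (Fin p → ℝ)} [IsFiniteMeasure φ] (hφ : ∀ᵐ y ∂φ, y ∈ parameterProj n p '' K)
    (h : ∀ u, ∫ v, eval v (rename Sum.inr u) ∂μ = ∫ y, eval y u ∂φ) :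
    μ.map (parameterProj n p) = φ := by
  have hπ : AEMeasurable (parameterProj n p) μ := (parameterProj n p).continuous.aemeasurable
  have hY : IsCompact (parameterProj n p '' K) := hK.image (parameterProj n p).continuous
  refine measure_ext_of_integral_eval_eq hY ((ae_map_iff hπ hY.isClosed.measurableSet).2
    (hμ.mono fun v hv => mem_image_of_mem _ hv)) hφ fun u => ?_
  rw [integral_map hπ (continuous_eval u).aestronglyMeasurable, ← h]
  simp only [eval_rename]
  rfl

variable {n p : ℕ} {ι : Type*} [Fintype ι] {H : ι → MvPolynomial (Fin n ⊕ Fin p) ℝ}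
  {γ : (Fin p → ℕ) → ℝ} {φ : Measure (Fin p → ℝ)} [IsProbabilityMeasure φ]

theorem tendsto_Lz_of_nearOptimal (hH : ArchimedeanFamily H)
    (hφ : ∀ᵐ y ∂φ, y ∈ parameterProj n p '' nonnegSet H)
    (hγ : ∀ β, γ β = ∫ y, ∏ l, y l ^ β l ∂φ) {f q : MvPolynomial (Fin n ⊕ Fin p) ℝ}
    {b : (Fin p → ℝ) → ℝ} (hb : AEStronglyMeasurable b φ)
    (hopt : ∀ᵐ y ∂φ, ∀ v ∈ nonnegSet H, parameterProj n p v = y →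
      eval v f = fiberMin (nonnegSet H) (parameterProj n p) (fun v => eval v f) y →
      eval v q = b y)
    {z : ℕ → (Fin n → ℕ) → (Fin p → ℕ) → ℝ} {ε : ℕ → ℝ} (hε : Tendsto ε atTop (𝓝 0))
    (hz : ∀ᶠ i in atTop, RelaxFeasible n p H γ i (z i) ∧
      Lz n p (z i) f ≤ rhoSDP n p H γ f i + ε i) :
    Tendsto (fun i => Lz n p (z i) q) atTop (𝓝 (∫ y, b y ∂φ)) := by
  rw [tendsto_iff_ultrafilter]
  intro U hU
  have hK : IsCompact (nonnegSet H) := isCompact_nonnegSet hH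
  obtain ⟨F, hF, hlim⟩ := exists_mem_states_tendsto hH U (fun i => isLinearMap_Lz (z i))
    (hU (hz.mono fun i h => Lz_one_of_relaxFeasible hγ h.1))
    (fun m hm => hU ((hz.and (eventually_Lz_nonneg hm)).mono fun i h => h.2 _ h.1.1))
  obtain ⟨μ, _, hμ, hFμ⟩ := exists_measure_integral_eq_of_mem_states hH hF
  rw [tendsto_pi_nhds] at hlim
  have marginal : μ.map (parameterProj n p) = φ := by
    refine map_parameterProj_eq hK hμ hφ fun u => (hFμ _).symm.trans ?_
    refine tendsto_nhds_unique (hlim _) (tendsto_const_nhds.congr' (hU ?_))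
    have hY : IsCompact (parameterProj n p '' nonnegSet H) :=
      hK.image (parameterProj n p).continuous
    filter_upwards [hz, eventually_Lz_rename_inr hY hφ (H := H) hγ u] with i hi hu
    exact (hu _ hi.1).symm
  have optimal : ∫ v, eval v f ∂μ ≤
      ∫ y, fiberMin (nonnegSet H) (parameterProj n p) (fun v => eval v f) y ∂φ := by
    have bound := (tendsto_const_nhds (x := ∫ y, fiberMin (nonnegSet H) (parameterProj n p)
      (fun v => eval v f) y ∂φ)).add (hε.mono_left hU)
    rw [add_zero] at bound
    rw [← hFμ]
    refine le_of_tendsto_of_tendsto (hlim f) bound <| hU ?_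
    filter_upwards [hz, eventually_rhoSDP_le hH hφ hγ f] with i hi hρ
    exact hi.2.trans (add_le_add_left hρ _)
  subst marginal
  rw [← integral_eq_of_integral_le_fiberMin hK hμ (polyContinuousMap _ f) optimal hb hopt, ← hFμ]
  exact hlim q

end Convergence

section ParametricProgram

variable {n p : ℕ} {I I' : Type*} {hx : I → MvPolynomial (Fin n ⊕ Fin p) ℝ}
  {hy : I' → MvPolynomial (Fin p) ℝ}

lemma sumElim_mem_nonnegSet {x : Fin n → ℝ} {y : Fin p → ℝ} :
    Sum.elim x y ∈ nonnegSet (Sum.elim hx fun k => rename Sum.inr (hy k)) ↔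
      (∀ j, 0 ≤ eval (Sum.elim x y) (hx j)) ∧ ∀ k, 0 ≤ eval y (hy k) := by
  simp [nonnegSet, eval_rename]

lemma fiberMin_parameterProj (g : (Fin n ⊕ Fin p → ℝ) → ℝ) {y : Fin p → ℝ}
    (hy' : ∀ k, 0 ≤ eval y (hy k)) :
    fiberMin (nonnegSet (Sum.elim hx fun k => rename Sum.inr (hy k))) (parameterProj n p) g y =
      sInf ((fun x => g (Sum.elim x y)) '' {x | ∀ j, 0 ≤ eval (Sum.elim x y) (hx j)}) := by
  rw [fiberMin]
  congr 1
  ext r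
  constructor
  · rintro ⟨v, ⟨hv, rfl⟩, rfl⟩
    rw [← Sum.elim_comp_inl_inr v] at hv
    exact ⟨v ∘ Sum.inl, (sumElim_mem_nonnegSet.1 hv).1, congrArg g (Sum.elim_comp_inl_inr v)⟩
  · rintro ⟨x, hx', rfl⟩
    exact ⟨_, ⟨sumElim_mem_nonnegSet.2 ⟨hx', hy'⟩, rfl⟩, rfl⟩

end ParametricProgram

theorem stmt16_general (n p m s : ℕ)
    (f : MvPolynomial (Fin n ⊕ Fin p) ℝ)
    (hx : Fin m → MvPolynomial (Fin n ⊕ Fin p) ℝ)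
    (hy : Fin s → MvPolynomial (Fin p) ℝ)
    (H : Fin m ⊕ Fin s → MvPolynomial (Fin n ⊕ Fin p) ℝ)
    (hH : H = Sum.elim hx (fun k => rename Sum.inr (hy k)))
    (Y : Set (Fin p → ℝ)) (hYdef : Y = {y | ∀ k, 0 ≤ eval y (hy k)})
    (Ky : (Fin p → ℝ) → Set (Fin n → ℝ))
    (hKy : ∀ y, Ky y = {x | ∀ j, 0 ≤ eval (Sum.elim x y) (hx j)})
    (φ : Measure (Fin p → ℝ)) [IsProbabilityMeasure φ] (hφY : φ Yᶜ = 0)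
    (hne : ∀ᵐ y ∂φ, (Ky y).Nonempty)
    (harch : ArchimedeanQM n p H)
    (γ : (Fin p → ℕ) → ℝ)
    (hγ : ∀ β, γ β = ∫ y in Y, ∏ l, y l ^ β l ∂φ)
    (J : (Fin p → ℝ) → ℝ)
    (hJ : ∀ y, J y = sInf ((fun x => evalXY n p f (x, y)) '' Ky y))
    (Xstar : (Fin p → ℝ) → Set (Fin n → ℝ))
    (hXs : ∀ y, Xstar y = {x ∈ Ky y | evalXY n p f (x, y) = J y})
    (q : MvPolynomial (Fin n ⊕ Fin p) ℝ)
    (b : (Fin p → ℝ) → ℝ) (hb : AEStronglyMeasurable b φ)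
    (hopt : ∀ᵐ y ∂φ, ∀ x ∈ Xstar y, evalXY n p q (x, y) = b y)
    (zi : ℕ → (Fin n → ℕ) → (Fin p → ℕ) → ℝ) (ε : ℕ → ℝ) (hε : Tendsto ε atTop (𝓝 0))
    (hzi : ∀ᶠ i in atTop, RelaxFeasible n p H γ i (zi i) ∧
      Lz n p (zi i) f ≤ rhoSDP n p H γ f i + ε i) :
    Tendsto (fun i => Lz n p (zi i) q) atTop (𝓝 (∫ y, b y ∂φ)) := by
  subst hH hYdef
  have hφ : ∀ᵐ y ∂φ, ∀ k, 0 ≤ eval y (hy k) := hφY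
  have restrict_eq : φ.restrict {y | ∀ k, 0 ≤ eval y (hy k)} = φ :=
    Measure.restrict_eq_self_of_ae_mem hφ
  rw [restrict_eq] at hγ
  refine tendsto_Lz_of_nearOptimal (archimedeanFamily_of_archimedeanQM harch) ?_ hγ hb ?_ hε hzi
  · filter_upwards [hφ, hne] with y hy' ⟨x, hx'⟩
    rw [hKy] at hx'
    exact ⟨_, sumElim_mem_nonnegSet.2 ⟨hx', hy'⟩, rfl⟩
  · filter_upwards [hφ, hopt] with y hy' hopt v hv hvy hmin
    rw [fiberMin_parameterProj _ hy'] at hmin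
    subst hvy
    have split : Sum.elim (v ∘ Sum.inl) (parameterProj n p v) = v := Sum.elim_comp_inl_inr v
    have feasible := (sumElim_mem_nonnegSet.1 (split.symm ▸ hv)).1
    have := hopt (v ∘ Sum.inl)
    simp only [hXs, hKy, hJ, evalXY, split, mem_ofPred_eq] at this
    exact this ⟨by simpa only [split] using feasible, hmin⟩

/-- necessary conditions for persistency of a boolean variable `x_k`. -/
theorem stmt16 (n p m s : ℕ)
    (f : MvPolynomial (Fin n ⊕ Fin p) ℝ)
    (hx : Fin m → MvPolynomial (Fin n ⊕ Fin p) ℝ)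
    (hy : Fin s → MvPolynomial (Fin p) ℝ)
    (H : Fin m ⊕ Fin s → MvPolynomial (Fin n ⊕ Fin p) ℝ)
    (hH : H = Sum.elim hx (fun k => rename Sum.inr (hy k)))
    (Y : Set (Fin p → ℝ)) (hYdef : Y = {y | ∀ k, 0 ≤ eval y (hy k)}) (hYc : IsCompact Y)
    (K : Set ((Fin n → ℝ) × (Fin p → ℝ)))
    (hKdef : K = {w | w.2 ∈ Y ∧ ∀ j, 0 ≤ evalXY n p (hx j) w}) (hKc : IsCompact K)
    (Ky : (Fin p → ℝ) → Set (Fin n → ℝ))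
    (hKy : ∀ y, Ky y = {x | ∀ j, 0 ≤ eval (Sum.elim x y) (hx j)})
    (hne : ∀ y ∈ Y, (Ky y).Nonempty)
    (harch : ArchimedeanQM n p H)
    (φ : Measure (Fin p → ℝ)) [IsProbabilityMeasure φ] (hφY : φ Yᶜ = 0)
    (γ : (Fin p → ℕ) → ℝ)
    (hγ : ∀ β, γ β = ∫ y in Y, ∏ l, y l ^ β l ∂φ)
    (J : (Fin p → ℝ) → ℝ)
    (hJ : ∀ y, J y = sInf ((fun x => evalXY n p f (x, y)) '' Ky y))
    (Xstar : (Fin p → ℝ) → Set (Fin n → ℝ))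
    (hXs : ∀ y, Xstar y = {x ∈ Ky y | evalXY n p f (x, y) = J y})
    (k : Fin n)
    (j1 : Fin m) (hj1 : hx j1 = X (Sum.inl k) ^ 2 - X (Sum.inl k))
    (j2 : Fin m) (hj2 : hx j2 = X (Sum.inl k) - X (Sum.inl k) ^ 2)
    (zi : ℕ → (Fin n → ℕ) → (Fin p → ℕ) → ℝ)
    (hzi : ∀ i, iZero n p H f ≤ i →
      RelaxFeasible n p H γ i (zi i) ∧
      Lz n p (zi i) f ≤ rhoSDP n p H γ f i + 1 / (i : ℝ)) :
    ((∀ᵐ y ∂φ, ∀ x ∈ Xstar y, x k = 1) →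
      Tendsto (fun i => zi i (fun j => if j = k then 1 else 0) (fun _ => 0))
        atTop (𝓝 1)) ∧
    ((∀ᵐ y ∂φ, ∀ x ∈ Xstar y, x k = 0) →
      Tendsto (fun i => zi i (fun j => if j = k then 1 else 0) (fun _ => 0))
        atTop (𝓝 0)) := by
  have limit (c : ℝ) (hopt : ∀ᵐ y ∂φ, ∀ x ∈ Xstar y, x k = c) :
      Tendsto (fun i => zi i (fun j => if j = k then 1 else 0) (fun _ => 0)) atTop (𝓝 c) := by
    simpa [Lz_X_inl] using stmt16_general n p m s f hx hy H hH Y hYdef Ky hKy φ hφY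
      (measure_mono_null (compl_subset_compl.2 hne) hφY) harch γ hγ J hJ Xstar hXs
      (X (Sum.inl k)) (fun _ => c) aestronglyMeasurable_const (by simpa [evalXY] using hopt) zi _
      tendsto_one_div_atTop_nhds_zero_nat ((eventually_ge_atTop _).mono hzi)
  exact ⟨limit 1, limit 0⟩
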